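/- The quantum mutual information satisfies the following triangle inequalities: for every density operator on a finite-dimensional tripartite Hilbert space H^A⊗H^B⊗H^C, I(A:BC) ≤ I(B:AC) + I(AB:C); and for every density operator on a finite-dimensional four-partite Hilbert space H^A⊗H^B⊗H^C⊗H^D, I(AB:CD) ≤ I(AC:BD) + I(AD:BC), I(A:B:CD) ≤ I(A:BD:C) + I(AD:B:C), and I'(A:B:CD) ≤ I'(A:BD:C) + I'(AD:B:C). -/

import Mathlib

open scoped BigOperators ComplexOrder
open Matrix

noncomputable section

/-- The function `x ↦ -x·log₂ x` (with the convention `0·log₂ 0 = 0`). -/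
def negxlog2 (x : ℝ) : ℝ := -(x * Real.logb 2 x)

/-- The von Neumann entropy (base 2), `S(ρ) = -Tr(ρ log₂ ρ)`, computed as the sum of
`-λ log₂ λ` over the eigenvalues of a Hermitian matrix (junk value `0` otherwise). -/
def vnEntropy {n : Type} [Fintype n] [DecidableEq n] (ρ : Matrix n n ℂ) : ℝ :=
  if h : ρ.IsHermitian then ∑ i, negxlog2 (h.eigenvalues i) else 0

/-- The Tsallis q-entropy `S_q(ρ) = (1 - Tr ρ^q)/(q-1)`, computed via eigenvalues. -/
def tsallisEntropy (q : ℝ) {n : Type} [Fintype n] [DecidableEq n] (ρ : Matrix n n ℂ) : ℝ :=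
  if h : ρ.IsHermitian then (1 - ∑ i, (h.eigenvalues i) ^ q) / (q - 1) else 0

/-- A density operator: positive semidefinite with unit trace. -/
def IsDensity {n : Type} [Fintype n] [DecidableEq n] (ρ : Matrix n n ℂ) : Prop :=
  ρ.PosSemidef ∧ ρ.trace = 1

/-- rank-one projection `|ψ⟩⟨ψ|`. -/
def outer {α : Type} (ψ : α → ℂ) : Matrix α α ℂ :=
  fun a b => ψ a * (starRingEnd ℂ) (ψ b)

section multi

variable {ι : Type} [Fintype ι] [DecidableEq ι] {d : ι → Type}
  [∀ i, Fintype (d i)] [∀ i, DecidableEq (d i)]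

/-- Combine an assignment of basis indices on the parties in `s` with one on the
complementary parties. -/
def combine (s : Finset ι) (x : (i : {j // j ∈ s}) → d i.1) (z : (i : {j // j ∉ s}) → d i.1)
    (i : ι) : d i :=
  if h : i ∈ s then x ⟨i, h⟩ else z ⟨i, h⟩

/-- The reduced state on the parties in `s`: partial trace over the complementary parties. -/
def pTr (ρ : Matrix (∀ i, d i) (∀ i, d i) ℂ) (s : Finset ι) :
    Matrix ((i : {j // j ∈ s}) → d i.1) ((i : {j // j ∈ s}) → d i.1) ℂ :=
  fun x y => ∑ z : (i : {j // j ∉ s}) → d i.1, ρ (combine s x z) (combine s y z)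

/-- von Neumann entropy of the reduced state on `s`. -/
def Sv (ρ : Matrix (∀ i, d i) (∀ i, d i) ℂ) (s : Finset ι) : ℝ := vnEntropy (pTr ρ s)

/-- Tsallis q-entropy of the reduced state on `s`. -/
def Sq (q : ℝ) (ρ : Matrix (∀ i, d i) (∀ i, d i) ℂ) (s : Finset ι) : ℝ :=
  tsallisEntropy q (pTr ρ s)

/-- Multipartite quantum mutual information `I(X₁:⋯:X_k) = Σ_s S(X_s) - S(X₁⋯X_k)` of a
partition `P` (each block a finset of parties, treated as a single party). -/
def MI (ρ : Matrix (∀ i, d i) (∀ i, d i) ℂ) (P : Finset (Finset ι)) : ℝ :=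
  (∑ X ∈ P, Sv ρ X) - Sv ρ (P.sup id)

/-- Dual multipartite quantum mutual information
`I'(X₁:⋯:X_k) = Σ_s S(X̄_s) - (k-1) S(X₁⋯X_k)`, where `X̄_s` is the union of all blocks
other than `X_s`. -/
def MI' (ρ : Matrix (∀ i, d i) (∀ i, d i) ℂ) (P : Finset (Finset ι)) : ℝ :=
  (∑ X ∈ P, Sv ρ (P.sup id \ X)) - ((P.card : ℝ) - 1) * Sv ρ (P.sup id)

/-- Tsallis multipartite quantum mutual information. -/
def MIq (q : ℝ) (ρ : Matrix (∀ i, d i) (∀ i, d i) ℂ) (P : Finset (Finset ι)) : ℝ :=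
  (∑ X ∈ P, Sq q ρ X) - Sq q ρ (P.sup id)

/-- Tsallis dual multipartite quantum mutual information. -/
def MIq' (q : ℝ) (ρ : Matrix (∀ i, d i) (∀ i, d i) ℂ) (P : Finset (Finset ι)) : ℝ :=
  (∑ X ∈ P, Sq q ρ (P.sup id \ X)) - ((P.card : ℝ) - 1) * Sq q ρ (P.sup id)

/-- The finest partition of the set `s` of parties: each party its own block. -/
def finest (s : Finset ι) : Finset (Finset ι) := s.image fun i => {i}

end multi

/-- A partition (of a subsystem): nonempty pairwise disjoint blocks. -/
def IsPartition {ι : Type} [DecidableEq ι] (P : Finset (Finset ι)) : Prop :=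
  (∀ X ∈ P, X.Nonempty) ∧ (P : Set (Finset ι)).PairwiseDisjoint id

/-- One coarsening step: (a) discarding whole blocks, (b) merging blocks into one block,
(c) discarding some parties from within a block containing at least two parties. -/
inductive CoarserStep {ι : Type} [DecidableEq ι] : Finset (Finset ι) → Finset (Finset ι) → Prop
  | discard {P Q : Finset (Finset ι)} (hQP : Q ⊆ P) (hQ : Q.Nonempty) : CoarserStep P Q
  | merge (P T : Finset (Finset ι)) (hT : T ⊆ P) (hT' : T.Nonempty) :
      CoarserStep P (insert (T.sup id) (P \ T))
  | shrink (P : Finset (Finset ι)) (X X' : Finset ι) (hX : X ∈ P) (h2 : 2 ≤ X.card)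
      (hsub : X' ⊆ X) (hne : X'.Nonempty) : CoarserStep P (insert X' (P.erase X))

/-- `Coarser P Q` : the partition `Q` is coarser than `P` (`P ≻ Q`). -/
def Coarser {ι : Type} [DecidableEq ι] (P Q : Finset (Finset ι)) : Prop :=
  Relation.ReflTransGen CoarserStep P Q

end

/-!
For positive definite `ρ` and `σ`, the relative entropy has the representation
`Tr ρ(log ρ - log σ) - Tr ρ + Tr σ = ∫₀¹ s · max_X F_s(X) ds`, where
`F_s(X) = 2 Re Tr((ρ - σ)X) - s Tr(σXX*) - (1 - s) Tr(ρX*X)`; in the eigenbases of `ρ` and `σ` this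
is a scalar integral. Passing to marginals restricts `X` to a unital *-subalgebra without changing
`F_s`, so the maximum, and with it the relative entropy, can only decrease. Applied to `ρ_ABC` and
`ρ_AB ⊗ 1` under the partial trace over `A`, this is strong subadditivity for full-rank states;
replacing `ρ` by `ρ + ε` and letting `ε → 0` gives it for all states. Each triangle inequality is
then a sum of instances of subadditivity and strong subadditivity.
-/

section Scalar

variable {p q s : ℝ}

theorem convexCombination_pos (hp : 0 < p) (hq : 0 < q) (hs : s ∈ Set.Icc (0 : ℝ) 1) :
    0 < s * q + (1 - s) * p := by
  rcases hs.1.eq_or_lt with rfl | hs_pos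
  · simpa using hp
  · exact add_pos_of_pos_of_nonneg (mul_pos hs_pos hq)
      (mul_nonneg (sub_nonneg.2 hs.2) hp.le)

theorem intervalIntegrable_mul_sq_sub_div (hp : 0 < p) (hq : 0 < q) :
    IntervalIntegrable (fun s => s * ((p - q) ^ 2 / (s * q + (1 - s) * p)))
      MeasureTheory.volume 0 1 := by
  refine ContinuousOn.intervalIntegrable ?_
  rw [Set.uIcc_of_le zero_le_one]
  exact continuousOn_id.mul <| continuousOn_const.div (by fun_prop)
    fun s hs => (convexCombination_pos hp hq hs).ne'

theorem integral_mul_sq_sub_div (hp : 0 < p) (hq : 0 < q) :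
    ∫ s in (0 : ℝ)..1, s * ((p - q) ^ 2 / (s * q + (1 - s) * p))
      = p * Real.log p - p * Real.log q - p + q := by
  have hasDerivAt_antideriv : ∀ s ∈ Set.uIcc (0 : ℝ) 1,
      HasDerivAt (fun s => (q - p) * s - p * Real.log (s * q + (1 - s) * p))
        (s * ((p - q) ^ 2 / (s * q + (1 - s) * p))) s := by
    intro s hs
    rw [Set.uIcc_of_le zero_le_one] at hs
    have hr := (convexCombination_pos hp hq hs).ne'
    have hasDerivAt_denom : HasDerivAt (fun s : ℝ => s * q + (1 - s) * p) (1 * q + -1 * p) s :=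
      ((hasDerivAt_id s).mul_const q).add (((hasDerivAt_id s).const_sub 1).mul_const p)
    refine (((hasDerivAt_id s).const_mul (q - p)).sub
      ((hasDerivAt_denom.log hr).const_mul p)).congr_deriv ?_
    rw [← mul_div_assoc, ← mul_div_assoc, eq_div_iff hr, sub_mul, div_mul_cancel₀ _ hr]
    ring
  rw [intervalIntegral.integral_eq_sub_of_hasDerivAt hasDerivAt_antideriv
    (intervalIntegrable_mul_sq_sub_div hp hq)]
  norm_num
  ring

theorem two_mul_re_sub_normSq_le {r : ℝ} (hr : 0 < r) (c : ℝ) (w y : ℂ) :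
    2 * c * (star w * y).re - r * Complex.normSq y ≤ Complex.normSq w * (c ^ 2 / r) := by
  rw [← mul_div_assoc, le_div_iff₀ hr]
  simp only [Complex.normSq_apply, Complex.mul_re, Complex.star_def, Complex.conj_re,
    Complex.conj_im]
  nlinarith [sq_nonneg (c * w.re - r * y.re), sq_nonneg (c * w.im - r * y.im)]

theorem two_mul_re_sub_normSq_eq {r : ℝ} (hr : r ≠ 0) (c : ℝ) (w : ℂ) :
    2 * c * (star w * (↑(c / r) * w)).re - r * Complex.normSq (↑(c / r) * w)
      = Complex.normSq w * (c ^ 2 / r) := by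
  have re_eq : (star w * (↑(c / r) * w)).re = c / r * Complex.normSq w := by
    rw [mul_left_comm, Complex.star_def, mul_comm _ w, Complex.mul_conj, ← Complex.ofReal_mul,
      Complex.ofReal_re]
  rw [re_eq, Complex.normSq_mul, Complex.normSq_ofReal]
  field_simp
  ring

end Scalar

section EigenCoeff

variable {n : Type*} [Fintype n] [DecidableEq n] {ρ σ : Matrix n n ℂ}

/-- The entries of `A` with respect to the eigenbases of `σ` (rows) and `ρ` (columns). -/
noncomputable def eigenCoeff (hρ : ρ.IsHermitian) (hσ : σ.IsHermitian) (A : Matrix n n ℂ) :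
    Matrix n n ℂ :=
  star (hσ.eigenvectorUnitary : Matrix n n ℂ) * A * hρ.eigenvectorUnitary

variable (hρ : ρ.IsHermitian) (hσ : σ.IsHermitian)

theorem eigenCoeff_surjective : Function.Surjective (eigenCoeff hρ hσ) := fun Y =>
  ⟨hσ.eigenvectorUnitary * Y * star (hρ.eigenvectorUnitary : Matrix n n ℂ), by
    simp [eigenCoeff, mul_assoc, ← mul_assoc (star (hσ.eigenvectorUnitary : Matrix n n ℂ))]⟩

theorem trace_conjTranspose_mul_cfc_mul_mul_cfc (A B : Matrix n n ℂ) (f g : ℝ → ℝ) :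
    (Aᴴ * cfc g σ * B * cfc f ρ).trace = ∑ j, ∑ i,
      star (eigenCoeff hρ hσ A j i) * eigenCoeff hρ hσ B j i
        * ↑(g (hσ.eigenvalues j) * f (hρ.eigenvalues i)) := by
  have trace_eq : (Aᴴ * cfc g σ * B * cfc f ρ).trace
      = ((eigenCoeff hρ hσ A)ᴴ * diagonal (fun j => (g (hσ.eigenvalues j) : ℂ))
          * (eigenCoeff hρ hσ B * diagonal (fun i => (f (hρ.eigenvalues i) : ℂ)))).trace := by
    rw [hσ.cfc_eq, hρ.cfc_eq]
    simp only [IsHermitian.cfc, Unitary.conjStarAlgAut_apply, eigenCoeff, conjTranspose_mul,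
      star_eq_conjTranspose, conjTranspose_conjTranspose]
    rw [← mul_assoc, trace_mul_comm]
    simp only [mul_assoc]
    rfl
  rw [trace_eq, trace, Finset.sum_comm]
  simp only [diag_apply, mul_apply (M := _ * _), mul_diagonal, conjTranspose_apply]
  refine Finset.sum_congr rfl fun i _ => Finset.sum_congr rfl fun j _ => ?_
  push_cast
  ring

theorem re_trace_cfc_mul_cfc (f g : ℝ → ℝ) :
    (cfc g σ * cfc f ρ).trace.re = ∑ j, ∑ i, Complex.normSq (eigenCoeff hρ hσ 1 j i)
      * (g (hσ.eigenvalues j) * f (hρ.eigenvalues i)) := by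
  have h := trace_conjTranspose_mul_cfc_mul_mul_cfc hρ hσ 1 1 f g
  rw [conjTranspose_one, one_mul, mul_one] at h
  simp only [h, Complex.re_sum, Complex.re_mul_ofReal]
  simp only [Complex.star_def, ← Complex.normSq_eq_conj_mul_self, Complex.ofReal_re]

end EigenCoeff

section RelativeEntropy

variable {m n : Type*} [Fintype m] [DecidableEq m] [Fintype n] [DecidableEq n]
  {ρ σ : Matrix n n ℂ} {ρ' σ' : Matrix m m ℂ}

/-- The concave quadratic functional `X ↦ 2 Re Tr((ρ - σ)X) - s Tr(σXX*) - (1 - s) Tr(ρX*X)` whose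
maximum, integrated against `s ds` over `[0, 1]`, is `relEntropy ρ σ - Tr ρ + Tr σ`. -/
noncomputable def variationalForm (s : ℝ) (ρ σ X : Matrix n n ℂ) : ℝ :=
  2 * (ρ * X).trace.re - 2 * (σ * X).trace.re
    - s * (σ * (X * Xᴴ)).trace.re - (1 - s) * (ρ * (Xᴴ * X)).trace.re

/-- The maximum of `variationalForm s ρ σ`, in terms of the eigenvalues of `ρ` and `σ` and the
overlaps of their eigenbases. -/
noncomputable def variationalMax (s : ℝ) (hρ : ρ.IsHermitian) (hσ : σ.IsHermitian) : ℝ :=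
  ∑ j, ∑ i, Complex.normSq (eigenCoeff hρ hσ 1 j i)
    * ((hρ.eigenvalues i - hσ.eigenvalues j) ^ 2
      / (s * hσ.eigenvalues j + (1 - s) * hρ.eigenvalues i))

/-- The quantum relative entropy `Tr ρ(log ρ - log σ)`, in nats. -/
noncomputable def relEntropy (ρ σ : Matrix n n ℂ) : ℝ :=
  (ρ * (cfc Real.log ρ - cfc Real.log σ)).trace.re

theorem variationalForm_eq_sum (s : ℝ) (hρ : ρ.IsHermitian) (hσ : σ.IsHermitian)
    (X : Matrix n n ℂ) :
    variationalForm s ρ σ X = ∑ j, ∑ i,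
      (2 * (hρ.eigenvalues i - hσ.eigenvalues j)
          * (star (eigenCoeff hρ hσ 1 j i) * eigenCoeff hρ hσ X j i).re
        - (s * hσ.eigenvalues j + (1 - s) * hρ.eigenvalues i)
          * Complex.normSq (eigenCoeff hρ hσ X j i)) := by
  have trace_formula := trace_conjTranspose_mul_cfc_mul_mul_cfc hρ hσ
  have trace_ρX := trace_formula 1 X id (fun _ => 1)
  have trace_σX := trace_formula 1 X (fun _ => 1) id
  have trace_σXX := trace_formula X X (fun _ => 1) id
  have trace_ρXX := trace_formula X X id (fun _ => 1)
  rw [cfc_id ℝ ρ hρ.isSelfAdjoint, cfc_const_one ℝ σ, conjTranspose_one, one_mul, one_mul,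
    trace_mul_comm] at trace_ρX
  rw [cfc_id ℝ σ hσ.isSelfAdjoint, cfc_const_one ℝ ρ, conjTranspose_one, one_mul,
    mul_one] at trace_σX
  rw [cfc_id ℝ σ hσ.isSelfAdjoint, cfc_const_one ℝ ρ, mul_one, mul_assoc, trace_mul_comm,
    mul_assoc] at trace_σXX
  rw [cfc_id ℝ ρ hρ.isSelfAdjoint, cfc_const_one ℝ σ, mul_one, trace_mul_comm] at trace_ρXX
  rw [variationalForm, trace_ρX, trace_σX, trace_σXX, trace_ρXX]
  simp only [Complex.re_sum, Complex.re_mul_ofReal, Finset.mul_sum, ← Finset.sum_sub_distrib]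
  simp only [Complex.star_def, ← Complex.normSq_eq_conj_mul_self, Complex.ofReal_re, id_eq]
  refine Finset.sum_congr rfl fun j _ => Finset.sum_congr rfl fun i _ => ?_
  ring

theorem isGreatest_variationalMax {s : ℝ} (hs : s ∈ Set.Icc (0 : ℝ) 1) (hρ : ρ.PosDef)
    (hσ : σ.PosDef) :
    IsGreatest (Set.range (variationalForm s ρ σ)) (variationalMax s hρ.1 hσ.1) := by
  have denom_pos (j i : n) :=
    convexCombination_pos (hρ.eigenvalues_pos i) (hσ.eigenvalues_pos j) hs
  constructor
  · obtain ⟨X, hX⟩ := eigenCoeff_surjective hρ.1 hσ.1 <| of fun j i =>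
      ↑((hρ.1.eigenvalues i - hσ.1.eigenvalues j)
        / (s * hσ.1.eigenvalues j + (1 - s) * hρ.1.eigenvalues i)) * eigenCoeff hρ.1 hσ.1 1 j i
    refine ⟨X, ?_⟩
    rw [variationalForm_eq_sum s hρ.1 hσ.1, hX]
    exact Finset.sum_congr rfl fun j _ => Finset.sum_congr rfl fun i _ =>
      two_mul_re_sub_normSq_eq (denom_pos j i).ne' _ _
  · rintro _ ⟨X, rfl⟩
    rw [variationalForm_eq_sum s hρ.1 hσ.1]
    exact Finset.sum_le_sum fun j _ => Finset.sum_le_sum fun i _ =>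
      two_mul_re_sub_normSq_le (denom_pos j i) _ _ _

theorem cfc_mul_log (hρ : ρ.IsHermitian) :
    cfc (fun x => x * Real.log x) ρ = ρ * cfc Real.log ρ := by
  rw [cfc_mul (fun x => x) Real.log ρ continuousOn_id (finite_real_spectrum.continuousOn _),
    cfc_id' ℝ ρ hρ.isSelfAdjoint]

theorem relEntropy_sub_trace_add_trace (hρ : ρ.IsHermitian) (hσ : σ.IsHermitian) :
    relEntropy ρ σ - ρ.trace.re + σ.trace.re = ∑ j, ∑ i,
      Complex.normSq (eigenCoeff hρ hσ 1 j i)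
        * (hρ.eigenvalues i * Real.log (hρ.eigenvalues i)
          - hρ.eigenvalues i * Real.log (hσ.eigenvalues j)
          - hρ.eigenvalues i + hσ.eigenvalues j) := by
  have trace_ρ := re_trace_cfc_mul_cfc hρ hσ id (fun _ => 1)
  have trace_σ := re_trace_cfc_mul_cfc hρ hσ (fun _ => 1) id
  have trace_ρ_log_ρ := re_trace_cfc_mul_cfc hρ hσ (fun x => x * Real.log x) (fun _ => 1)
  have trace_ρ_log_σ := re_trace_cfc_mul_cfc hρ hσ id Real.log
  rw [cfc_id ℝ ρ hρ.isSelfAdjoint, cfc_const_one ℝ σ, one_mul] at trace_ρ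
  rw [cfc_id ℝ σ hσ.isSelfAdjoint, cfc_const_one ℝ ρ, mul_one] at trace_σ
  rw [cfc_mul_log hρ, cfc_const_one ℝ σ, one_mul] at trace_ρ_log_ρ
  rw [cfc_id ℝ ρ hρ.isSelfAdjoint, trace_mul_comm] at trace_ρ_log_σ
  rw [relEntropy, mul_sub, trace_sub, Complex.sub_re, trace_ρ, trace_σ, trace_ρ_log_ρ,
    trace_ρ_log_σ]
  simp only [← Finset.sum_sub_distrib, ← Finset.sum_add_distrib, id_eq]
  refine Finset.sum_congr rfl fun j _ => Finset.sum_congr rfl fun i _ => ?_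
  ring

theorem mul_variationalMax (s : ℝ) (hρ : ρ.IsHermitian) (hσ : σ.IsHermitian) :
    s * variationalMax s hρ hσ = ∑ j, ∑ i, Complex.normSq (eigenCoeff hρ hσ 1 j i)
      * (s * ((hρ.eigenvalues i - hσ.eigenvalues j) ^ 2
        / (s * hσ.eigenvalues j + (1 - s) * hρ.eigenvalues i))) := by
  simp only [variationalMax, Finset.mul_sum, mul_left_comm s]

theorem intervalIntegrable_fun_sum {ι : Type*} {μ : MeasureTheory.Measure ℝ} {a b : ℝ}
    (t : Finset ι) {f : ι → ℝ → ℝ} (hf : ∀ i ∈ t, IntervalIntegrable (f i) μ a b) :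
    IntervalIntegrable (fun x => ∑ i ∈ t, f i x) μ a b := by
  simpa only [Finset.sum_fn] using IntervalIntegrable.sum t hf

theorem intervalIntegrable_mul_variationalMax (hρ : ρ.PosDef) (hσ : σ.PosDef) :
    IntervalIntegrable (fun s => s * variationalMax s hρ.1 hσ.1) MeasureTheory.volume 0 1 := by
  simp only [mul_variationalMax]
  exact intervalIntegrable_fun_sum _ fun j _ => intervalIntegrable_fun_sum _ fun i _ =>
    (intervalIntegrable_mul_sq_sub_div (hρ.eigenvalues_pos i) (hσ.eigenvalues_pos j)).const_mul _

theorem integral_mul_variationalMax (hρ : ρ.PosDef) (hσ : σ.PosDef) :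
    ∫ s in (0 : ℝ)..1, s * variationalMax s hρ.1 hσ.1
      = relEntropy ρ σ - ρ.trace.re + σ.trace.re := by
  have integrable_term (j i : n) :=
    (intervalIntegrable_mul_sq_sub_div (hρ.eigenvalues_pos i) (hσ.eigenvalues_pos j)).const_mul
      (Complex.normSq (eigenCoeff hρ.1 hσ.1 1 j i))
  simp only [mul_variationalMax]
  rw [relEntropy_sub_trace_add_trace hρ.1 hσ.1, intervalIntegral.integral_finsetSum
    fun j _ => intervalIntegrable_fun_sum _ fun i _ => integrable_term j i]
  refine Finset.sum_congr rfl fun j _ => ?_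
  rw [intervalIntegral.integral_finsetSum fun i _ => integrable_term j i]
  refine Finset.sum_congr rfl fun i _ => ?_
  rw [intervalIntegral.integral_const_mul,
    integral_mul_sq_sub_div (hρ.eigenvalues_pos i) (hσ.eigenvalues_pos j)]

/-- `ρ'` is the restriction of the functional `ρ` along the inclusion `J` of an algebra of
observables, that is, `Tr(ρ J(X)) = Tr(ρ' X)` for every `X`. -/
def IsMarginal (J : Matrix m m ℂ →⋆ₐ[ℂ] Matrix n n ℂ) (ρ : Matrix n n ℂ) (ρ' : Matrix m m ℂ) :
    Prop :=
  ∀ X, (ρ * J X).trace = (ρ' * X).trace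

variable {J : Matrix m m ℂ →⋆ₐ[ℂ] Matrix n n ℂ}

theorem IsMarginal.trace_eq (h : IsMarginal J ρ ρ') : ρ.trace = ρ'.trace := by
  simpa using h 1

theorem variationalForm_map (hρ : IsMarginal J ρ ρ') (hσ : IsMarginal J σ σ') (s : ℝ)
    (X : Matrix m m ℂ) : variationalForm s ρ σ (J X) = variationalForm s ρ' σ' X := by
  simp only [variationalForm, ← star_eq_conjTranspose, ← map_star, ← map_mul, hρ _, hσ _]

theorem variationalMax_le_of_isMarginal {s : ℝ} (hs : s ∈ Set.Icc (0 : ℝ) 1) (hρ : ρ.PosDef)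
    (hσ : σ.PosDef) (hρ' : ρ'.PosDef) (hσ' : σ'.PosDef) (hJρ : IsMarginal J ρ ρ')
    (hJσ : IsMarginal J σ σ') :
    variationalMax s hρ'.1 hσ'.1 ≤ variationalMax s hρ.1 hσ.1 := by
  obtain ⟨X, hX⟩ := (isGreatest_variationalMax hs hρ' hσ').1
  rw [← hX, ← variationalForm_map hJρ hJσ]
  exact (isGreatest_variationalMax hs hρ hσ).2 ⟨J X, rfl⟩

theorem relEntropy_le_of_isMarginal (hρ : ρ.PosDef) (hσ : σ.PosDef) (hρ' : ρ'.PosDef)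
    (hσ' : σ'.PosDef) (hJρ : IsMarginal J ρ ρ') (hJσ : IsMarginal J σ σ') :
    relEntropy ρ' σ' ≤ relEntropy ρ σ := by
  have integral_le : ∫ s in (0 : ℝ)..1, s * variationalMax s hρ'.1 hσ'.1
      ≤ ∫ s in (0 : ℝ)..1, s * variationalMax s hρ.1 hσ.1 :=
    intervalIntegral.integral_mono_on zero_le_one
      (intervalIntegrable_mul_variationalMax hρ' hσ') (intervalIntegrable_mul_variationalMax hρ hσ)
      fun s hs => mul_le_mul_of_nonneg_left
        (variationalMax_le_of_isMarginal hs hρ hσ hρ' hσ' hJρ hJσ) hs.1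
  rw [integral_mul_variationalMax hρ' hσ', integral_mul_variationalMax hρ hσ,
    hJρ.trace_eq, hJσ.trace_eq] at integral_le
  linarith

end RelativeEntropy

section Entropy

variable {m n : Type} [Fintype m] [DecidableEq m] [Fintype n] [DecidableEq n]

theorem trace_cfc {M : Matrix n n ℂ} (hM : M.IsHermitian) (f : ℝ → ℝ) :
    (cfc f M).trace = ∑ i, (f (hM.eigenvalues i) : ℂ) := by
  rw [hM.cfc_eq, IsHermitian.cfc, Unitary.conjStarAlgAut_apply, trace_mul_comm, ← mul_assoc,
    Unitary.coe_star_mul_self, one_mul, trace_diagonal]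
  rfl

theorem vnEntropy_eq_sum {M : Matrix n n ℂ} (hM : M.IsHermitian) :
    vnEntropy M = ∑ i, negxlog2 (hM.eigenvalues i) :=
  dif_pos hM

theorem re_trace_mul_cfc_log {M : Matrix n n ℂ} (hM : M.IsHermitian) :
    (M * cfc Real.log M).trace.re = -(Real.log 2 * vnEntropy M) := by
  rw [← cfc_mul_log hM, trace_cfc hM, ← Complex.ofReal_sum, Complex.ofReal_re, vnEntropy_eq_sum hM,
    Finset.mul_sum, ← Finset.sum_neg_distrib]
  refine Finset.sum_congr rfl fun i _ => ?_
  rw [negxlog2, Real.logb]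
  field_simp

theorem vnEntropy_add_smul_one {M : Matrix n n ℂ} (hM : M.IsHermitian) (c : ℝ) :
    vnEntropy (M + c • 1) = ∑ i, negxlog2 (hM.eigenvalues i + c) := by
  have cfc_shift : M + c • 1 = cfc (fun x => x + c) M := by
    rw [cfc_add_const c (fun x => x) M continuousOn_id hM.isSelfAdjoint,
      cfc_id' ℝ M hM.isSelfAdjoint, Algebra.algebraMap_eq_smul_one]
  have hMc : (cfc (fun x => x + c) M).IsHermitian := cfc_predicate _ M
  have h : (cfc negxlog2 (cfc (fun x => x + c) M)).trace.re
      = ∑ i, negxlog2 (hM.eigenvalues i + c) := by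
    rw [← cfc_comp' negxlog2 (fun x => x + c) M ((finite_real_spectrum.image _).continuousOn _)
      (by fun_prop) hM.isSelfAdjoint, trace_cfc hM, ← Complex.ofReal_sum, Complex.ofReal_re]
  rw [cfc_shift, vnEntropy_eq_sum hMc, ← h, trace_cfc hMc, ← Complex.ofReal_sum,
    Complex.ofReal_re]

theorem continuous_negxlog2 : Continuous negxlog2 := by
  have negxlog2_eq : negxlog2 = fun x => -(x * Real.log x / Real.log 2) := by
    funext x
    rw [negxlog2, Real.logb, mul_div_assoc]
  rw [negxlog2_eq]
  exact (Real.continuous_mul_log.div_const _).neg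

theorem tendsto_vnEntropy_add_smul_one {M : Matrix n n ℂ} (hM : M.IsHermitian) (k : ℝ) :
    Filter.Tendsto (fun ε : ℝ => vnEntropy (M + (k * ε) • 1)) (nhdsWithin 0 (Set.Ioi 0))
      (nhds (vnEntropy M)) := by
  have continuous_shift : Continuous fun ε : ℝ => ∑ i, negxlog2 (hM.eigenvalues i + k * ε) :=
    continuous_finsetSum _ fun i _ => continuous_negxlog2.comp (by fun_prop)
  simp only [vnEntropy_add_smul_one hM, vnEntropy_eq_sum hM]
  simpa using (continuous_shift.tendsto 0).mono_left nhdsWithin_le_nhds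

theorem vnEntropy_eq_zero_of_unique [Unique n] {M : Matrix n n ℂ} (hM : M.IsHermitian)
    (htr : M.trace = 1) : vnEntropy M = 0 := by
  have eigenvalue_eq_one : hM.eigenvalues default = 1 := by
    simpa [hM.trace_eq_sum_eigenvalues] using htr
  simp [vnEntropy_eq_sum hM, negxlog2, eigenvalue_eq_one]

theorem vnEntropy_submatrix {M : Matrix n n ℂ} (hM : M.IsHermitian) (e : m ≃ n) :
    vnEntropy (M.submatrix e e) = vnEntropy M := by
  have hMe : (M.submatrix e e).IsHermitian := hM.submatrix e
  have charpoly_eq : (M.submatrix e e).charpoly = M.charpoly := charpoly_reindex e.symm M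
  have h := congrArg (fun p => (p.roots.map fun z => negxlog2 (RCLike.re z)).sum) charpoly_eq
  simp only [hMe.roots_charpoly_eq_eigenvalues, hM.roots_charpoly_eq_eigenvalues] at h
  simpa [vnEntropy_eq_sum hMe, vnEntropy_eq_sum hM] using h

theorem map_cfc_of_isHermitian (J : Matrix m m ℂ →⋆ₐ[ℂ] Matrix n n ℂ) (f : ℝ → ℝ)
    {M : Matrix m m ℂ} (hM : M.IsHermitian) : J (cfc f M) = cfc f (J M) :=
  J.map_cfc f M (finite_real_spectrum.continuousOn f)
    (J.toAlgHom.toLinearMap.continuous_of_finiteDimensional) hM.isSelfAdjoint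
    (hM.isSelfAdjoint.map J)

open scoped MatrixOrder in
theorem map_posDef (J : Matrix m m ℂ →⋆ₐ[ℂ] Matrix n n ℂ) {M : Matrix m m ℂ} (hM : M.PosDef) :
    (J M).PosDef :=
  ((hM.isUnit.map J).isStrictlyPositive (map_nonneg J hM.posSemidef.nonneg)).posDef

theorem relEntropy_map_eq {J : Matrix m m ℂ →⋆ₐ[ℂ] Matrix n n ℂ} {ρ : Matrix n n ℂ}
    {ρ' : Matrix m m ℂ} (hρ : ρ.IsHermitian) (hρ' : ρ'.IsHermitian) (hJ : IsMarginal J ρ ρ') :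
    relEntropy ρ (J ρ') = Real.log 2 * (vnEntropy ρ' - vnEntropy ρ) := by
  rw [relEntropy, ← map_cfc_of_isHermitian J _ hρ', mul_sub, trace_sub, Complex.sub_re, hJ,
    re_trace_mul_cfc_log hρ, re_trace_mul_cfc_log hρ']
  ring

variable {ab b bc : Type} [Fintype ab] [DecidableEq ab] [Fintype b] [DecidableEq b]
  [Fintype bc] [DecidableEq bc]

theorem vnEntropy_add_le_of_isMarginal {Jab : Matrix ab ab ℂ →⋆ₐ[ℂ] Matrix n n ℂ}
    {Jbc : Matrix bc bc ℂ →⋆ₐ[ℂ] Matrix n n ℂ} {Jb : Matrix b b ℂ →⋆ₐ[ℂ] Matrix bc bc ℂ}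
    {ρ : Matrix n n ℂ} {ρab : Matrix ab ab ℂ} {ρbc : Matrix bc bc ℂ} {ρb : Matrix b b ℂ}
    (hρ : ρ.PosDef) (hρab : ρab.PosDef) (hρbc : ρbc.PosDef) (hρb : ρb.PosDef)
    (hJab : IsMarginal Jab ρ ρab) (hJbc : IsMarginal Jbc ρ ρbc) (hJb : IsMarginal Jb ρbc ρb)
    (hsquare : IsMarginal Jbc (Jab ρab) (Jb ρb)) :
    vnEntropy ρ + vnEntropy ρb ≤ vnEntropy ρab + vnEntropy ρbc := by
  have relEntropy_le := relEntropy_le_of_isMarginal hρ (map_posDef Jab hρab) hρbc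
    (map_posDef Jb hρb) hJbc hsquare
  rw [relEntropy_map_eq hρ.1 hρab.1 hJab, relEntropy_map_eq hρbc.1 hρb.1 hJb,
    mul_le_mul_iff_right₀ (Real.log_pos one_lt_two)] at relEntropy_le
  linarith

end Entropy

section PartialTrace

open scoped Kronecker

variable {m n r : Type} [Fintype r]

/-- The partial trace over the second factor of a tensor factorization of a space with basis `n`,
given by an identification of `n` with a product of two sets of basis indices. -/
def partialTrace (e : n ≃ m × r) (R : Matrix n n ℂ) : Matrix m m ℂ :=
  of fun x y => ∑ z, R (e.symm (x, z)) (e.symm (y, z))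

theorem partialTrace_eq_sum_submatrix (e : n ≃ m × r) (R : Matrix n n ℂ) :
    partialTrace e R = ∑ z, R.submatrix (fun x => e.symm (x, z)) (fun x => e.symm (x, z)) := by
  ext x y
  simp [partialTrace, Matrix.sum_apply]

theorem posSemidef_partialTrace (e : n ≃ m × r) {R : Matrix n n ℂ} (hR : R.PosSemidef) :
    (partialTrace e R).PosSemidef := by
  rw [partialTrace_eq_sum_submatrix]
  exact posSemidef_sum _ fun z _ => hR.submatrix _

theorem posDef_partialTrace [Nonempty r] (e : n ≃ m × r) {R : Matrix n n ℂ} (hR : R.PosDef) :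
    (partialTrace e R).PosDef := by
  rw [partialTrace_eq_sum_submatrix]
  exact posDef_sum Finset.univ_nonempty fun z _ =>
    hR.submatrix (e.symm.injective.comp (Prod.mk_left_injective z))

theorem partialTrace_add_smul_one [DecidableEq m] [DecidableEq n] (e : n ≃ m × r)
    (R : Matrix n n ℂ) (c : ℝ) :
    partialTrace e (R + c • 1) = partialTrace e R + (Fintype.card r * c) • 1 := by
  ext x y
  simp [partialTrace, Finset.sum_add_distrib, one_apply]

theorem partialTrace_partialTrace {k t : Type} [Fintype t] (e : n ≃ m × r) (f : m ≃ k × t)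
    (R : Matrix n n ℂ) :
    partialTrace f (partialTrace e R) =
      partialTrace ((e.trans (f.prodCongr (.refl r))).trans (.prodAssoc k t r)) R := by
  ext x y
  simp [partialTrace, Fintype.sum_prod_type]

theorem partialTrace_partialTrace_swap {a b c : Type} [Fintype a] [Fintype c]
    (R : Matrix (a × b × c) (a × b × c) ℂ) :
    partialTrace (.prodComm a b) (partialTrace (Equiv.prodAssoc a b c).symm R)
      = partialTrace (.refl (b × c)) (partialTrace (.prodComm a (b × c)) R) := by
  ext y y'
  simpa [partialTrace] using Finset.sum_comm

theorem partialTrace_eq_submatrix {m' r' : Type} [Fintype r'] (e : n ≃ m × r) (e' : n ≃ m' × r')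
    (g : m' ≃ m) (h : r' ≃ r) (he : ∀ x, e x = (g (e' x).1, h (e' x).2)) (R : Matrix n n ℂ) :
    partialTrace e' R = (partialTrace e R).submatrix g g := by
  have symm_eq (x : m') (z : r') : e'.symm (x, z) = e.symm (g x, h z) := by
    rw [Equiv.eq_symm_apply, he, Equiv.apply_symm_apply]
  ext x y
  simp only [partialTrace, of_apply, submatrix_apply, symm_eq]
  exact h.sum_comp fun z => R (e.symm (g x, z)) (e.symm (g y, z))

variable [Fintype m] [DecidableEq m] [Fintype n] [DecidableEq n] [DecidableEq r]

/-- The inclusion `X ↦ X ⊗ 1` of the observables of the first factor of a tensor factorization. -/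
@[simps apply]
def ampliation (e : n ≃ m × r) : Matrix m m ℂ →⋆ₐ[ℂ] Matrix n n ℂ where
  toFun X := (X ⊗ₖ (1 : Matrix r r ℂ)).submatrix e e
  map_one' := by simp
  map_mul' X Y := by
    rw [submatrix_mul_equiv, ← mul_kronecker_mul, mul_one]
  map_zero' := by simp
  map_add' X Y := by simp [add_kronecker, submatrix_add]
  commutes' c := by
    simp [Algebra.algebraMap_eq_smul_one, smul_kronecker, submatrix_smul]
  map_star' X := by
    simp [star_eq_conjTranspose, conjTranspose_submatrix, conjTranspose_kronecker]

theorem isMarginal_partialTrace (e : n ≃ m × r) (R : Matrix n n ℂ) :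
    IsMarginal (ampliation e) R (partialTrace e R) := by
  intro X
  simp only [trace, diag_apply, mul_apply, ampliation_apply]
  rw [← e.symm.sum_comp]
  simp_rw [← e.symm.sum_comp (fun y => R _ y * _)]
  simp only [Fintype.sum_prod_type, submatrix_apply, kroneckerMap_apply,
    Equiv.apply_symm_apply, one_apply, mul_ite, mul_one, mul_zero,
    Finset.sum_ite_eq', Finset.mem_univ, if_true, partialTrace, of_apply, Finset.sum_mul]
  exact Finset.sum_congr rfl fun x _ => Finset.sum_comm

variable {a b c : Type} [Fintype a] [DecidableEq a] [Fintype b] [DecidableEq b]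
  [Fintype c] [DecidableEq c]

theorem partialTrace_ampliation (Y : Matrix (a × b) (a × b) ℂ) :
    partialTrace (.prodComm a (b × c)) (ampliation (Equiv.prodAssoc a b c).symm Y)
      = ampliation (.refl (b × c)) (partialTrace (.prodComm a b) Y) := by
  ext ⟨y, z⟩ ⟨y', z'⟩
  simp [partialTrace, ampliation_apply, Finset.sum_mul]

theorem vnEntropy_strongSubadditivity_of_posDef [Nonempty a] [Nonempty c]
    {R : Matrix (a × b × c) (a × b × c) ℂ} (hR : R.PosDef) :
    vnEntropy R + vnEntropy (partialTrace (.refl (b × c)) (partialTrace (.prodComm a (b × c)) R))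
      ≤ vnEntropy (partialTrace (Equiv.prodAssoc a b c).symm R)
        + vnEntropy (partialTrace (.prodComm a (b × c)) R) := by
  have hR_ab := posDef_partialTrace (Equiv.prodAssoc a b c).symm hR
  have hR_bc := posDef_partialTrace (.prodComm a (b × c)) hR
  have hR_b := posDef_partialTrace (.refl (b × c)) hR_bc
  refine vnEntropy_add_le_of_isMarginal hR hR_ab hR_bc hR_b (isMarginal_partialTrace _ R)
    (isMarginal_partialTrace _ R) (isMarginal_partialTrace _ _) ?_
  rw [← partialTrace_partialTrace_swap, ← partialTrace_ampliation]
  exact isMarginal_partialTrace _ _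

theorem vnEntropy_strongSubadditivity [Nonempty a] [Nonempty c]
    {R : Matrix (a × b × c) (a × b × c) ℂ} (hR : R.PosSemidef) :
    vnEntropy R + vnEntropy (partialTrace (.refl (b × c)) (partialTrace (.prodComm a (b × c)) R))
      ≤ vnEntropy (partialTrace (Equiv.prodAssoc a b c).symm R)
        + vnEntropy (partialTrace (.prodComm a (b × c)) R) := by
  have hR_ab := posSemidef_partialTrace (Equiv.prodAssoc a b c).symm hR
  have hR_bc := posSemidef_partialTrace (.prodComm a (b × c)) hR
  have hR_b := posSemidef_partialTrace (.refl (b × c)) hR_bc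
  have ssa_perturbed : ∀ ε ∈ Set.Ioi (0 : ℝ), _ := fun ε hε =>
    vnEntropy_strongSubadditivity_of_posDef
      (PosDef.posSemidef_add hR (PosDef.one.smul (Set.mem_Ioi.1 hε)))
  simp only [partialTrace_add_smul_one, ← mul_assoc] at ssa_perturbed
  refine le_of_tendsto_of_tendsto
    (.add ?_ (tendsto_vnEntropy_add_smul_one hR_b.1 _))
    ((tendsto_vnEntropy_add_smul_one hR_ab.1 _).add
      (tendsto_vnEntropy_add_smul_one hR_bc.1 _))
    (Filter.eventually_of_mem self_mem_nhdsWithin ssa_perturbed)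
  simpa using tendsto_vnEntropy_add_smul_one hR.1 1

end PartialTrace

section Multipartite

variable {ι : Type} {d : ι → Type}

/-- The tensor factorization of the parties satisfying `r` into those satisfying `p` and those
satisfying `q`, when exactly one of `p` and `q` holds on `r`. -/
def piSplit {p q r : ι → Prop} [DecidablePred p] (hr : ∀ i, r i ↔ p i ∨ q i)
    (hpq : ∀ i, p i → ¬ q i) :
    ((i : {i // r i}) → d i) ≃ ((i : {i // p i}) → d i) × ((i : {i // q i}) → d i) where
  toFun x := (fun i => x ⟨i, (hr i).2 (.inl i.2)⟩, fun i => x ⟨i, (hr i).2 (.inr i.2)⟩)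
  invFun y i := if hp : p i then y.1 ⟨i, hp⟩ else y.2 ⟨i, ((hr i).1 i.2).resolve_left hp⟩
  left_inv x := by
    funext i
    dsimp only
    split_ifs <;> rfl
  right_inv y :=
    Prod.ext (funext fun i => dif_pos i.2) (funext fun i => dif_neg fun hp => hpq i hp i.2)

variable [Fintype ι] [DecidableEq ι] [∀ i, Fintype (d i)] {ρ : Matrix (∀ i, d i) (∀ i, d i) ℂ}

theorem pTr_eq_partialTrace (s : Finset ι) :
    pTr ρ s = partialTrace (Equiv.piEquivPiSubtypeProd (· ∈ s) d) ρ :=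
  rfl

variable [∀ i, DecidableEq (d i)]

theorem Sv_eq_vnEntropy_partialTrace {m r : Type} [Fintype m] [DecidableEq m] [Fintype r]
    (hρ : ρ.PosSemidef) {s : Finset ι} (e : (∀ i, d i) ≃ m × r)
    (g : ((i : {i // i ∈ s}) → d i) ≃ m) (h : ((i : {i // i ∉ s}) → d i) ≃ r)
    (he : ∀ x, e x = (g fun i => x i, h fun i => x i)) :
    Sv ρ s = vnEntropy (partialTrace e ρ) := by
  rw [Sv, pTr_eq_partialTrace, partialTrace_eq_submatrix e _ g h he,
    vnEntropy_submatrix (posSemidef_partialTrace e hρ).1]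

theorem IsDensity.nonempty (hρ : IsDensity ρ) (i : ι) : Nonempty (d i) := by
  by_contra h
  have := not_nonempty_iff.1 h
  have : IsEmpty (∀ i, d i) := isEmpty_pi.2 ⟨i, this⟩
  simpa [trace] using hρ.2

theorem IsDensity.Sv_union_add_Sv_inter_le (hρ : IsDensity ρ) (s t : Finset ι) :
    Sv ρ (s ∪ t) + Sv ρ (s ∩ t) ≤ Sv ρ s + Sv ρ t := by
  have := hρ.nonempty
  let splitUnion : ((i : {i // i ∈ s ∪ t}) → d i) ≃ ((i : {i // i ∈ s \ t}) → d i)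
      × ((i : {i // i ∈ s ∩ t}) → d i) × ((i : {i // i ∈ t \ s}) → d i) :=
    (piSplit (q := (· ∈ t)) (by grind) (by grind)).trans
      (.prodCongr (.refl _) (piSplit (by grind) (by grind)))
  let splitAll := (Equiv.piEquivPiSubtypeProd (· ∈ s ∪ t) d).trans
    (splitUnion.prodCongr (.refl _))
  have ssa := vnEntropy_strongSubadditivity (posSemidef_partialTrace splitAll hρ.1)
  simp only [partialTrace_partialTrace] at ssa
  rwa [← Sv_eq_vnEntropy_partialTrace hρ.1 splitAll splitUnion (.refl _) fun _ => rfl,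
    ← Sv_eq_vnEntropy_partialTrace (s := s) hρ.1 _ (piSplit (by grind) (by grind))
      (piSplit (by grind) (by grind)) fun _ => rfl,
    ← Sv_eq_vnEntropy_partialTrace (s := t) hρ.1 _ (piSplit (by grind) (by grind))
      (piSplit (by grind) (by grind)) fun _ => rfl,
    ← Sv_eq_vnEntropy_partialTrace (s := s ∩ t) hρ.1 _ (.refl _)
      ((piSplit (q := (· ∉ t)) (by grind) (by grind)).trans
      (.prodCongr (.refl _) (piSplit (by grind) (by grind)))) fun _ => rfl] at ssa

theorem IsDensity.Sv_empty (hρ : IsDensity ρ) : Sv ρ ∅ = 0 := by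
  rw [Sv, pTr_eq_partialTrace]
  exact vnEntropy_eq_zero_of_unique (posSemidef_partialTrace _ hρ.1).1
    ((isMarginal_partialTrace _ ρ).trace_eq.symm.trans hρ.2)

theorem IsDensity.Sv_union_le (hρ : IsDensity ρ) {s t : Finset ι} (hst : Disjoint s t) :
    Sv ρ (s ∪ t) ≤ Sv ρ s + Sv ρ t := by
  simpa [Finset.disjoint_iff_inter_eq_empty.1 hst, hρ.Sv_empty] using
    hρ.Sv_union_add_Sv_inter_le s t

theorem IsDensity.Sv_union_union_add_Sv_le (hρ : IsDensity ρ) {s t : Finset ι}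
    (hst : Disjoint s t) (u : Finset ι) :
    Sv ρ (u ∪ (s ∪ t)) + Sv ρ u ≤ Sv ρ (u ∪ s) + Sv ρ (u ∪ t) := by
  have h := hρ.Sv_union_add_Sv_inter_le (u ∪ s) (u ∪ t)
  rwa [← Finset.union_inter_distrib_left, Finset.disjoint_iff_inter_eq_empty.1 hst,
    Finset.union_empty, ← Finset.union_union_distrib_left] at h

end Multipartite

section MutualInfo

variable {ι : Type} [Fintype ι] [DecidableEq ι] {d : ι → Type} [∀ i, Fintype (d i)]
  [∀ i, DecidableEq (d i)] {ρ : Matrix (∀ i, d i) (∀ i, d i) ℂ}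

theorem MI_pair {A B : Finset ι} (hA : A.Nonempty) (hAB : Disjoint A B) :
    MI ρ {A, B} = Sv ρ A + Sv ρ B - Sv ρ (A ∪ B) := by
  simp [MI, hAB.ne hA.ne_empty]

theorem MI_triple {A B C : Finset ι} (hA : A.Nonempty) (hB : B.Nonempty) (hAB : Disjoint A B)
    (hAC : Disjoint A C) (hBC : Disjoint B C) :
    MI ρ {A, B, C} = Sv ρ A + Sv ρ B + Sv ρ C - Sv ρ (A ∪ B ∪ C) := by
  simp [MI, hAB.ne hA.ne_empty, hAC.ne hA.ne_empty, hBC.ne hB.ne_empty, add_assoc]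

theorem MI'_triple {A B C : Finset ι} (hA : A.Nonempty) (hB : B.Nonempty) (hAB : Disjoint A B)
    (hAC : Disjoint A C) (hBC : Disjoint B C) :
    MI' ρ {A, B, C} = Sv ρ (A ∪ B) + Sv ρ (A ∪ C) + Sv ρ (B ∪ C) - 2 * Sv ρ (A ∪ B ∪ C) := by
  have hAB_ne := hAB.ne hA.ne_empty
  have hAC_ne := hAC.ne hA.ne_empty
  have hBC_ne := hBC.ne hB.ne_empty
  have sup_eq : ({A, B, C} : Finset (Finset ι)).sup id = A ∪ B ∪ C := by simp
  have card_eq : ({A, B, C} : Finset (Finset ι)).card = 3 :=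
    Finset.card_eq_three.2 ⟨A, B, C, hAB_ne, hAC_ne, hBC_ne, rfl⟩
  have sdiff_A : (A ∪ B ∪ C) \ A = B ∪ C := by grind [Finset.disjoint_left]
  have sdiff_B : (A ∪ B ∪ C) \ B = A ∪ C := by grind [Finset.disjoint_left]
  have sdiff_C : (A ∪ B ∪ C) \ C = A ∪ B := by grind [Finset.disjoint_left]
  rw [MI', sup_eq, card_eq, Finset.sum_insert (by simp [hAB_ne, hAC_ne]),
    Finset.sum_pair hBC_ne, sdiff_A, sdiff_B, sdiff_C]
  push_cast
  ring

theorem MI_triangle {P : Fin 3 → Finset ι} (hρ : IsDensity ρ) (hne : ∀ i, (P i).Nonempty)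
    (hP : ∀ i j, i ≠ j → Disjoint (P i) (P j)) :
    MI ρ {P 0, P 1 ∪ P 2} ≤ MI ρ {P 1, P 0 ∪ P 2} + MI ρ {P 0 ∪ P 1, P 2} := by
  have expand_0_12 : MI ρ {P 0, P 1 ∪ P 2} = _ := MI_pair (hne 0) (by simp [hP])
  have expand_1_02 : MI ρ {P 1, P 0 ∪ P 2} = _ := MI_pair (hne 1) (by simp [hP])
  have expand_01_2 : MI ρ {P 0 ∪ P 1, P 2} = _ := MI_pair (by simp [hne]) (by simp [hP])
  have sa_1_2 := hρ.Sv_union_le (hP 1 2 (by decide))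
  have ssa_1_2_0 := hρ.Sv_union_union_add_Sv_le (hP 1 2 (by decide)) (P 0)
  rw [expand_0_12, expand_1_02, expand_01_2]
  simp only [Finset.union_comm, Finset.union_left_comm] at sa_1_2 ssa_1_2_0 ⊢
  linarith

variable {Q : Fin 4 → Finset ι}

theorem MI_pair_triangle (hρ : IsDensity ρ) (hne : ∀ i, (Q i).Nonempty)
    (hQ : ∀ i j, i ≠ j → Disjoint (Q i) (Q j)) :
    MI ρ {Q 0 ∪ Q 1, Q 2 ∪ Q 3}
      ≤ MI ρ {Q 0 ∪ Q 2, Q 1 ∪ Q 3} + MI ρ {Q 0 ∪ Q 3, Q 1 ∪ Q 2} := by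
  have expand_01_23 : MI ρ {Q 0 ∪ Q 1, Q 2 ∪ Q 3} = _ := MI_pair (by simp [hne]) (by simp [hQ])
  have expand_02_13 : MI ρ {Q 0 ∪ Q 2, Q 1 ∪ Q 3} = _ := MI_pair (by simp [hne]) (by simp [hQ])
  have expand_03_12 : MI ρ {Q 0 ∪ Q 3, Q 1 ∪ Q 2} = _ := MI_pair (by simp [hne]) (by simp [hQ])
  have sa_2_3 := hρ.Sv_union_le (hQ 2 3 (by decide))
  have ssa_0_1_2 := hρ.Sv_union_union_add_Sv_le (hQ 0 1 (by decide)) (Q 2)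
  have ssa_0_1_3 := hρ.Sv_union_union_add_Sv_le (hQ 0 1 (by decide)) (Q 3)
  have ssa_2_3_01 := hρ.Sv_union_union_add_Sv_le (hQ 2 3 (by decide)) (Q 0 ∪ Q 1)
  rw [expand_01_23, expand_02_13, expand_03_12]
  simp only [Finset.union_comm, Finset.union_left_comm] at sa_2_3 ssa_0_1_2 ssa_0_1_3 ssa_2_3_01 ⊢
  linarith

theorem MI_triple_triangle (hρ : IsDensity ρ) (hne : ∀ i, (Q i).Nonempty)
    (hQ : ∀ i j, i ≠ j → Disjoint (Q i) (Q j)) :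
    MI ρ {Q 0, Q 1, Q 2 ∪ Q 3} ≤ MI ρ {Q 0, Q 1 ∪ Q 3, Q 2} + MI ρ {Q 0 ∪ Q 3, Q 1, Q 2} := by
  have expand_0_1_23 : MI ρ {Q 0, Q 1, Q 2 ∪ Q 3} = _ :=
    MI_triple (hne 0) (hne 1) (by simp [hQ]) (by simp [hQ]) (by simp [hQ])
  have expand_0_13_2 : MI ρ {Q 0, Q 1 ∪ Q 3, Q 2} = _ :=
    MI_triple (hne 0) (by simp [hne]) (by simp [hQ]) (by simp [hQ]) (by simp [hQ])
  have expand_03_1_2 : MI ρ {Q 0 ∪ Q 3, Q 1, Q 2} = _ :=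
    MI_triple (by simp [hne]) (hne 1) (by simp [hQ]) (by simp [hQ]) (by simp [hQ])
  have sa_2_3 := hρ.Sv_union_le (hQ 2 3 (by decide))
  have sa_013_2 : Sv ρ (Q 0 ∪ Q 1 ∪ Q 3 ∪ Q 2) ≤ _ := hρ.Sv_union_le (by simp [hQ])
  have ssa_0_1_3 := hρ.Sv_union_union_add_Sv_le (hQ 0 1 (by decide)) (Q 3)
  rw [expand_0_1_23, expand_0_13_2, expand_03_1_2]
  simp only [Finset.union_comm, Finset.union_left_comm] at sa_2_3 sa_013_2 ssa_0_1_3 ⊢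
  linarith

theorem MI'_triple_triangle (hρ : IsDensity ρ) (hne : ∀ i, (Q i).Nonempty)
    (hQ : ∀ i j, i ≠ j → Disjoint (Q i) (Q j)) :
    MI' ρ {Q 0, Q 1, Q 2 ∪ Q 3}
      ≤ MI' ρ {Q 0, Q 1 ∪ Q 3, Q 2} + MI' ρ {Q 0 ∪ Q 3, Q 1, Q 2} := by
  have expand_0_1_23 : MI' ρ {Q 0, Q 1, Q 2 ∪ Q 3} = _ :=
    MI'_triple (hne 0) (hne 1) (by simp [hQ]) (by simp [hQ]) (by simp [hQ])
  have expand_0_13_2 : MI' ρ {Q 0, Q 1 ∪ Q 3, Q 2} = _ :=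
    MI'_triple (hne 0) (by simp [hne]) (by simp [hQ]) (by simp [hQ]) (by simp [hQ])
  have expand_03_1_2 : MI' ρ {Q 0 ∪ Q 3, Q 1, Q 2} = _ :=
    MI'_triple (by simp [hne]) (hne 1) (by simp [hQ]) (by simp [hQ]) (by simp [hQ])
  have sa_013_2 : Sv ρ (Q 0 ∪ Q 1 ∪ Q 3 ∪ Q 2) ≤ _ := hρ.Sv_union_le (by simp [hQ])
  have ssa_0_1_2 := hρ.Sv_union_union_add_Sv_le (hQ 0 1 (by decide)) (Q 2)
  have ssa_2_3_01 := hρ.Sv_union_union_add_Sv_le (hQ 2 3 (by decide)) (Q 0 ∪ Q 1)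
  rw [expand_0_1_23, expand_0_13_2, expand_03_1_2]
  simp only [Finset.union_comm, Finset.union_left_comm] at sa_013_2 ssa_0_1_2 ssa_2_3_01 ⊢
  linarith

end MutualInfo

theorem mutualInfo_triangle_general {ι κ : Type} [Fintype ι] [DecidableEq ι] [Fintype κ]
    [DecidableEq κ] {d : ι → Type} [∀ i, Fintype (d i)] [∀ i, DecidableEq (d i)]
    {d' : κ → Type} [∀ i, Fintype (d' i)] [∀ i, DecidableEq (d' i)]
    {ρ : Matrix (∀ i, d i) (∀ i, d i) ℂ} (hρ : IsDensity ρ)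
    {σ : Matrix (∀ i, d' i) (∀ i, d' i) ℂ} (hσ : IsDensity σ)
    {P : Fin 3 → Finset ι} (hP_ne : ∀ i, (P i).Nonempty)
    (hP : ∀ i j, i ≠ j → Disjoint (P i) (P j))
    {Q : Fin 4 → Finset κ} (hQ_ne : ∀ i, (Q i).Nonempty)
    (hQ : ∀ i j, i ≠ j → Disjoint (Q i) (Q j)) :
    MI ρ {P 0, P 1 ∪ P 2} ≤ MI ρ {P 1, P 0 ∪ P 2} + MI ρ {P 0 ∪ P 1, P 2}
    ∧ MI σ {Q 0 ∪ Q 1, Q 2 ∪ Q 3}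
        ≤ MI σ {Q 0 ∪ Q 2, Q 1 ∪ Q 3} + MI σ {Q 0 ∪ Q 3, Q 1 ∪ Q 2}
    ∧ MI σ {Q 0, Q 1, Q 2 ∪ Q 3}
        ≤ MI σ {Q 0, Q 1 ∪ Q 3, Q 2} + MI σ {Q 0 ∪ Q 3, Q 1, Q 2}
    ∧ MI' σ {Q 0, Q 1, Q 2 ∪ Q 3}
        ≤ MI' σ {Q 0, Q 1 ∪ Q 3, Q 2} + MI' σ {Q 0 ∪ Q 3, Q 1, Q 2} :=
  ⟨MI_triangle hρ hP_ne hP, MI_pair_triangle hσ hQ_ne hQ, MI_triple_triangle hσ hQ_ne hQ,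
    MI'_triple_triangle hσ hQ_ne hQ⟩

/-- Triangle inequalities for the quantum mutual information: for every
density operator on a tripartite space, `I(A:BC) ≤ I(B:AC) + I(AB:C)`; and for every
density operator on a four-partite space, `I(AB:CD) ≤ I(AC:BD) + I(AD:BC)`,
`I(A:B:CD) ≤ I(A:BD:C) + I(AD:B:C)` and `I'(A:B:CD) ≤ I'(A:BD:C) + I'(AD:B:C)`. -/
theorem mutualInfo_triangle
    {d3 : Fin 3 → Type} [∀ i, Fintype (d3 i)] [∀ i, DecidableEq (d3 i)]
    {d4 : Fin 4 → Type} [∀ i, Fintype (d4 i)] [∀ i, DecidableEq (d4 i)]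
    (ρ : Matrix (∀ i, d3 i) (∀ i, d3 i) ℂ) (hρ : IsDensity ρ)
    (σ : Matrix (∀ i, d4 i) (∀ i, d4 i) ℂ) (hσ : IsDensity σ) :
    MI ρ {({0} : Finset (Fin 3)), {1, 2}}
        ≤ MI ρ {({1} : Finset (Fin 3)), {0, 2}} + MI ρ {({0, 1} : Finset (Fin 3)), {2}}
    ∧ MI σ {({0, 1} : Finset (Fin 4)), {2, 3}}
        ≤ MI σ {({0, 2} : Finset (Fin 4)), {1, 3}}
            + MI σ {({0, 3} : Finset (Fin 4)), {1, 2}}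
    ∧ MI σ {({0} : Finset (Fin 4)), {1}, {2, 3}}
        ≤ MI σ {({0} : Finset (Fin 4)), {1, 3}, {2}}
            + MI σ {({0, 3} : Finset (Fin 4)), {1}, {2}}
    ∧ MI' σ {({0} : Finset (Fin 4)), {1}, {2, 3}}
        ≤ MI' σ {({0} : Finset (Fin 4)), {1, 3}, {2}}
            + MI' σ {({0, 3} : Finset (Fin 4)), {1}, {2}} :=
  mutualInfo_triangle_general hρ hσ (P := fun i => {i}) (Q := fun i => {i}) (by simp) (by simp)
    (by simp) (by simp)
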